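/- There exists a sequence of transitive carefully synchronizing PFAs with three symbols, n states and shortest carefully synchronizing word length Ω(2^{2n/5}/n): there exist a constant c > 0 and an integer N such that for every n ≥ N there is a transitive PFA with n states and an alphabet of 3 symbols which is carefully synchronizing and whose shortest carefully synchronizing word has length at least c·2^{2n/5}/n. -/

import Mathlib

/-- One step of a PFA on an `Option` state. -/
def pfaStep {Q σ : Type*} (δ : Q → σ → Option Q) (o : Option Q) (a : σ) : Option Q :=
  o.bind fun q => δ q a

/-- The (partial) state reached from `q` after reading word `w` in the PFA `δ`. -/
def pfaRun {Q σ : Type*} (δ : Q → σ → Option Q) (q : Q) (w : List σ) : Option Q :=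
  w.foldl (pfaStep δ) (some q)

/-- A word `w` is carefully synchronizing for the PFA `δ`. -/
def IsCareSyncWord {Q σ : Type*} (δ : Q → σ → Option Q) (w : List σ) : Prop :=
  ∃ qs : Q, ∀ q : Q, pfaRun δ q w = some qs

/-- A PFA is transitive if every state can be reached from every state by some word. -/
def PFATransitive {Q σ : Type*} (δ : Q → σ → Option Q) : Prop :=
  ∀ q q' : Q, ∃ w : List σ, pfaRun δ q w = some q'

/-!
A set of states can encode a configuration of a counter, with one state for each square of a cyclic
tape. The transitions are arranged so that every letter that is defined on a configuration either
maps it onto another one, whose number is larger by at most one, or overflows the counter. One of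
the letters maps the set of all states onto the configuration of the number `0`. Hence a carefully
synchronizing word makes the counter overflow: with `m` digits in base `b`, it has at least `b ^ m`
letters. A further digit costs `b + 1` states, one for each symbol that its square may hold, namely
a digit or the end marker. The bound is thus of order `b ^ (n / (b + 1))`, which is maximal for
`b = 4`, where it is `2 ^ (2 * n / 5)`.
-/

section Run

variable {Q R σ : Type*} {δ : Q → σ → Option Q}

theorem pfaRun_cons (δ : Q → σ → Option Q) (q : Q) (a : σ) (w : List σ) :
    pfaRun δ q (a :: w) = (δ q a).bind fun q' => pfaRun δ q' w := by
  have foldl_none (w : List σ) : w.foldl (pfaStep δ) none = none := by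
    induction w with
    | nil => rfl
    | cons _ _ ih => exact ih
  change w.foldl (pfaStep δ) (δ q a) = _
  cases δ q a with
  | none => exact foldl_none w
  | some _ => rfl

/-- Reachability of states in the PFA `δ`, as the reflexive transitive closure of reachability by a
single letter. -/
abbrev PFAReach (δ : Q → σ → Option Q) : Q → Q → Prop :=
  Relation.ReflTransGen fun q q' => ∃ a, δ q a = some q'

theorem exists_pfaRun_eq_some_of_pfaReach {q q' : Q} (h : PFAReach δ q q') :
    ∃ w, pfaRun δ q w = some q' := by
  induction h using Relation.ReflTransGen.head_induction_on with
  | refl => exact ⟨[], rfl⟩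
  | head hstep _ ih =>
    obtain ⟨a, ha⟩ := hstep
    obtain ⟨w, hw⟩ := ih
    exact ⟨a :: w, by rw [pfaRun_cons, ha, Option.bind_some, hw]⟩

/-- The PFA `δ` with its states renamed along `e`. -/
def pfaMap (e : Q ≃ R) (δ : Q → σ → Option Q) (r : R) (a : σ) : Option R :=
  (δ (e.symm r) a).map e

theorem pfaRun_pfaMap (e : Q ≃ R) (δ : Q → σ → Option Q) (r : R) (w : List σ) :
    pfaRun (pfaMap e δ) r w = (pfaRun δ (e.symm r) w).map e := by
  induction w generalizing r with
  | nil => exact congrArg some (e.apply_symm_apply r).symm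
  | cons a w ih =>
    rw [pfaRun_cons, pfaRun_cons, pfaMap]
    cases δ (e.symm r) a with
    | none => rfl
    | some q => simpa using ih (e q)

theorem isCareSyncWord_pfaMap (e : Q ≃ R) {w : List σ} :
    IsCareSyncWord (pfaMap e δ) w ↔ IsCareSyncWord δ w := by
  simp only [IsCareSyncWord, pfaRun_pfaMap, e.exists_congr_left, e.forall_congr_left,
    Option.map_eq_some_iff, ← e.eq_symm_apply, e.symm.apply_eq_iff_eq, exists_eq_right]

theorem PFATransitive.pfaMap (e : Q ≃ R) (h : PFATransitive δ) :
    PFATransitive (pfaMap e δ) := by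
  intro r r'
  obtain ⟨w, hw⟩ := h (e.symm r) (e.symm r')
  exact ⟨w, by rw [pfaRun_pfaMap, hw, Option.map_some, e.apply_symm_apply]⟩

/-- The word `w` is defined on all states in `S` and sends them to a single state; for `S = univ`
this is careful synchronization. -/
def PFASyncsOn (δ : Q → σ → Option Q) (S : Set Q) (w : List σ) : Prop :=
  ∃ s, ∀ q ∈ S, pfaRun δ q w = some s

namespace PFASyncsOn

variable {S S' : Set Q} {a : σ} {w : List σ}

theorem isSome_of_cons (h : PFASyncsOn δ S (a :: w)) {q : Q} (hq : q ∈ S) : (δ q a).isSome := by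
  obtain ⟨s, hs⟩ := h
  obtain ⟨q', hq', -⟩ := Option.bind_eq_some_iff.1 ((pfaRun_cons δ q a w).symm.trans (hs q hq))
  exact Option.isSome_of_eq_some hq'

theorem cons (hS : (δ · a) '' S ⊆ some '' S') (h : PFASyncsOn δ S' w) :
    PFASyncsOn δ S (a :: w) := by
  obtain ⟨s, hs⟩ := h
  refine ⟨s, fun q hq => ?_⟩
  obtain ⟨q', hq', heq⟩ := hS (Set.mem_image_of_mem _ hq)
  rw [pfaRun_cons, ← heq]
  exact hs q' hq'

theorem of_cons (hS : some '' S' ⊆ (δ · a) '' S) (h : PFASyncsOn δ S (a :: w)) :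
    PFASyncsOn δ S' w := by
  obtain ⟨s, hs⟩ := h
  refine ⟨s, fun q' hq' => ?_⟩
  obtain ⟨q, hq, heq⟩ := hS (Set.mem_image_of_mem _ hq')
  rw [← hs q hq, pfaRun_cons, show δ q a = some q' from heq, Option.bind_some]

theorem le_add_length {ι : Type*} {C : ι → Set Q} {v : ι → ℕ} {M : ℕ}
    (hC : ∀ i, (C i).Nontrivial)
    (hstep : ∀ i a, v i < M → (∀ q ∈ C i, (δ q a).isSome) →
      ∃ j, v j ≤ v i + 1 ∧ some '' C j ⊆ (δ · a) '' C i)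
    {i : ι} (h : PFASyncsOn δ (C i) w) : M ≤ v i + w.length := by
  induction w generalizing i with
  | nil =>
    obtain ⟨s, hs⟩ := h
    obtain ⟨p, hp, q, hq, hne⟩ := hC i
    exact absurd (Option.some_injective _ ((hs p hp).trans (hs q hq).symm)) hne
  | cons a w ih =>
    by_contra! hlt
    rw [List.length_cons] at hlt
    obtain ⟨j, hv, hj⟩ := hstep i a (by omega) fun q hq => h.isSome_of_cons hq
    have := ih (h.of_cons hj)
    omega

end PFASyncsOn

end Run

namespace PFACounter

/-- The action that the next turn of the tape performs. A tick selects the next action in this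
list. -/
inductive Phase
  | skip
  | erase
  | absorb
  | start
  | propagate
  | finish

namespace Phase

/-- The phase after a tick. -/
def succ : Phase → Option Phase
  | skip => some erase
  | erase => some absorb
  | absorb => some start
  | start => some propagate
  | propagate => some finish
  | finish => none

theorem succ_induction {P : Phase → Prop} (skip : P skip)
    (succ : ∀ p p', p.succ = some p' → P p → P p') (p : Phase) : P p := by
  have erase := succ _ _ rfl skip
  have absorb := succ _ _ rfl erase
  have start := succ _ _ rfl absorb
  have propagate := succ _ _ rfl start
  have finish := succ _ _ rfl propagate
  cases p <;> assumption

/-- Phases are numbered in order to count states. -/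
def equivFin : Phase ≃ Fin 6 where
  toFun
    | skip => 0
    | erase => 1
    | absorb => 2
    | start => 3
    | propagate => 4
    | finish => 5
  invFun := ![skip, erase, absorb, start, propagate, finish]
  left_inv p := by cases p <;> rfl
  right_inv i := by fin_cases i <;> rfl

instance : Fintype Phase := .ofEquiv _ equivFin.symm

theorem card : Fintype.card Phase = 6 := Fintype.card_congr equivFin

end Phase

/-- The content of a square of the tape of a base-`b` counter: a digit or the end marker `none`. -/
abbrev Symbol (b : ℕ) : Type := Option (Fin b)

/-- The states of a PFA that simulates a base-`b` counter with `ℓ + 1` digits written on a cyclic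
tape. A configuration of the counter is not a single state but a set of states: one control state
for the carry, and one state for each of the `ℓ + 2` squares. As only the control state and the
square under the head have a phase, each further square costs `b + 1` states. The sinks serve for
synchronization after an overflow and pad the number of states. -/
inductive State (b ℓ k : ℕ)
  | ctl (carry : Bool) (p : Phase)
  | head (x : Symbol b) (p : Phase)
  | cell (i : Fin (ℓ + 1)) (x : Symbol b)
  | sink (i : Fin (k + 2))

open Phase State

variable {b ℓ k : ℕ}

namespace State

/-- States are counted through this equivalence. -/
def equivSum (b ℓ k : ℕ) : State b ℓ k ≃
    (Bool × Phase ⊕ Symbol b × Phase) ⊕ (Fin (ℓ + 1) × Symbol b ⊕ Fin (k + 2)) where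
  toFun
    | ctl c p => .inl (.inl (c, p))
    | head x p => .inl (.inr (x, p))
    | cell i x => .inr (.inl (i, x))
    | sink i => .inr (.inr i)
  invFun
    | .inl (.inl (c, p)) => ctl c p
    | .inl (.inr (x, p)) => head x p
    | .inr (.inl (i, x)) => cell i x
    | .inr (.inr i) => sink i
  left_inv q := by cases q <;> rfl
  right_inv q := by rcases q with (_ | _) | (_ | _) <;> rfl

theorem nonempty_equiv_fin (b ℓ k : ℕ) :
    Nonempty (State b ℓ k ≃ Fin ((b + 1) * (ℓ + 7) + k + 14)) := by
  refine ⟨(equivSum b ℓ k).trans (Fintype.equivFinOfCardEq ?_)⟩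
  simp only [Fintype.card_sum, Fintype.card_prod, Fintype.card_bool, Fintype.card_fin,
    Fintype.card_option, Phase.card]
  ring

/-- The state for the symbol `x` in square `i`, where square `0` is under the head. -/
def square (p : Phase) (i : Fin (ℓ + 2)) (x : Symbol b) : State b ℓ k :=
  i.cases (head x p) fun i => cell i x

end State

section Transitions

/-- The effect of a tick. -/
def tick : State b ℓ k → Option (State b ℓ k)
  | ctl c p => p.succ.map (ctl c)
  | head x p => p.succ.map (head x)
  | cell i x => some (cell i x)
  | sink i => some (sink ⟨min (i + 1) (k + 1), by omega⟩)

variable [NeZero b]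

/-- The effect of a reset: all digits become `0` and the end marker moves under the head. -/
def reset : State b ℓ k → State b ℓ k
  | ctl _ _ => ctl false skip
  | head _ _ => head none skip
  | cell i _ => cell i (some 0)
  | sink _ => ctl false skip

/-- The effect of a turn: the action of the phase is performed and the tape moves on, so that the
square under the head becomes the last one. A turn is undefined where the action does not fit the
carry or the symbol. -/
def turn : State b ℓ k → Option (State b ℓ k)
  | ctl c p => match p, c with
    | skip, false => some (ctl false skip)
    | absorb, true => some (ctl false skip)
    | start, false => some (ctl true skip)
    | propagate, true => some (ctl true skip)
    | finish, true => some (sink 0)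
    | _, _ => none
  | head x p => match p, x with
    | skip, x => some (cell (Fin.last ℓ) x)
    | erase, some _ => some (sink 0)
    | absorb, some d =>
      if h : (d : ℕ) + 1 < b then some (cell (Fin.last ℓ) (some ⟨d + 1, h⟩)) else none
    | start, none => some (cell (Fin.last ℓ) none)
    | propagate, some d => if (d : ℕ) + 1 = b then some (cell (Fin.last ℓ) (some 0)) else none
    | finish, none => some (sink 0)
    | _, _ => none
  | cell i x => some (square skip i.castSucc x)
  | sink i => some (i.cases (cell (Fin.last ℓ) (some 0)) fun _ => sink 0)

/-- The transition function of the counter: letter `0` is a reset, `1` a tick and `2` a turn. -/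
def next (q : State b ℓ k) : Fin 3 → Option (State b ℓ k) :=
  ![some (reset q), tick q, turn q]

end Transitions

/-- `Rule p c x c' y` says that the counter with carry `c`, reading the symbol `x` in phase `p`,
replaces them by `c'` and `y`. -/
inductive Rule [NeZero b] : Phase → Bool → Symbol b → Bool → Symbol b → Prop
  | skip (x : Symbol b) : Rule skip false x false x
  | absorb (d : Fin b) (h : (d : ℕ) + 1 < b) : Rule absorb true (some d) false (some ⟨d + 1, h⟩)
  | start : Rule start false none true none
  | propagate (d : Fin b) (h : (d : ℕ) + 1 = b) : Rule propagate true (some d) true (some 0)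

namespace Rule

variable [NeZero b] {p : Phase} {c c' : Bool} {x y : Symbol b}

theorem turn_ctl (h : Rule p c x c' y) :
    turn (ctl c p : State b ℓ k) = some (ctl c' Phase.skip) := by
  cases h <;> rfl

theorem turn_head (h : Rule p c x c' y) :
    turn (head x p : State b ℓ k) = some (cell (Fin.last ℓ) y) := by
  cases h with
  | skip | start => rfl
  | absorb d h => exact dif_pos h
  | propagate d h => exact if_pos h

theorem exists_or_overflow (hc : (turn (ctl c p : State b ℓ k)).isSome)
    (hx : (turn (head x p : State b ℓ k)).isSome) :
    (∃ c' y, Rule p c x c' y) ∨ c = true ∧ x = none := by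
  rcases p, c, x with ⟨_ | _ | _ | _ | _ | _, _ | _, _ | d⟩ <;> first
    | exact .inr ⟨rfl, rfl⟩
    | exact .inl ⟨_, _, .skip _⟩
    | exact .inl ⟨_, _, .start⟩
    | exact .inl ⟨_, _, .absorb d (by by_contra h; simp [turn, h] at hx)⟩
    | exact .inl ⟨_, _, .propagate d (by by_contra h; simp [turn, h] at hx)⟩
    | simp [turn] at hc hx

theorem exists_of_digit (c : Bool) (d : Fin b) : ∃ p c' y, Rule p c (some d) c' y := by
  cases c with
  | false => exact ⟨_, _, _, .skip _⟩
  | true =>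
    rcases (Nat.succ_le_of_lt d.isLt).lt_or_eq with h | h
    · exact ⟨_, _, _, .absorb d h⟩
    · exact ⟨_, _, _, .propagate d h⟩

theorem carry_eq_false (h : Rule p c none c' y) : c = false := by
  cases h <;> rfl

theorem eq_none (h : Rule p c none c' y) : y = none := by
  cases h <;> rfl

theorem exists_digit {d : Fin b} (h : Rule p c (some d) c' y) :
    ∃ d' : Fin b, y = some d' ∧ d' + b * c'.toNat = d + c.toNat := by
  cases h with
  | skip => exact ⟨d, rfl, rfl⟩
  | absorb _ h => exact ⟨_, rfl, rfl⟩
  | propagate _ h => exact ⟨0, rfl, by simpa using h.symm⟩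

end Rule

section Tape

/-- The states of the squares of the tape `T`, listed from the head on. Symbols beyond the last
square are ignored, and squares beyond the end of `T` have no state. -/
def onTape (p : Phase) (T : List (Symbol b)) : Set (State b ℓ k) :=
  {q | ∃ (i : Fin (ℓ + 2)) (x : Symbol b), T[(i : ℕ)]? = some x ∧ q = square p i x}

/-- The states of the counter with carry `c` and tape `T`. -/
def configuration (c : Bool) (p : Phase) (T : List (Symbol b)) : Set (State b ℓ k) :=
  insert (ctl c p) (onTape p T)

variable {p p' : Phase}

theorem tick_square (h : p.succ = some p') (i : Fin (ℓ + 2)) (x : Symbol b) :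
    tick (square p i x : State b ℓ k) = some (square p' i x) := by
  induction i using Fin.cases with
  | zero => simp [square, tick, h]
  | succ i => rfl

theorem image_tick_onTape (h : p.succ = some p') (T : List (Symbol b)) :
    tick '' onTape (ℓ := ℓ) (k := k) p T = some '' onTape p' T := by
  ext r
  constructor
  · rintro ⟨_, ⟨i, x, hx, rfl⟩, rfl⟩
    exact ⟨_, ⟨i, x, hx, rfl⟩, (tick_square h i x).symm⟩
  · rintro ⟨_, ⟨i, x, hx, rfl⟩, rfl⟩
    exact ⟨_, ⟨i, x, hx, rfl⟩, tick_square h i x⟩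

theorem image_tick_configuration (h : p.succ = some p') (c : Bool) (T : List (Symbol b)) :
    tick '' configuration (ℓ := ℓ) (k := k) c p T = some '' configuration c p' T := by
  simp only [configuration, Set.image_insert_eq, image_tick_onTape h, tick, h, Option.map_some]

theorem nontrivial_configuration (c : Bool) (p : Phase) {T : List (Symbol b)} (hT : T ≠ []) :
    (configuration c p T : Set (State b ℓ k)).Nontrivial := by
  obtain ⟨x, T, rfl⟩ := List.exists_cons_of_ne_nil hT
  exact ⟨ctl c p, .inl rfl, head x p, .inr ⟨0, x, rfl, rfl⟩, nofun⟩

variable [NeZero b]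

theorem turn_square_succ (p : Phase) (i : Fin (ℓ + 1)) (x : Symbol b) :
    turn (square p i.succ x : State b ℓ k) = some (square skip i.castSucc x) := rfl

theorem image_turn_onTape {x y : Symbol b} {T : List (Symbol b)} (hT : T.length = ℓ + 1)
    (hx : turn (head x p : State b ℓ k) = some (cell (Fin.last ℓ) y)) :
    turn '' onTape (ℓ := ℓ) (k := k) p (x :: T) = some '' onTape skip (T ++ [y]) := by
  ext r
  constructor
  · rintro ⟨_, ⟨i, z, hz, rfl⟩, rfl⟩
    induction i using Fin.cases with
    | zero =>
      obtain rfl : x = z := by simpa using hz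
      exact ⟨_, ⟨Fin.last _, y, by simp [← hT], rfl⟩, hx.symm⟩
    | succ i =>
      refine ⟨_, ⟨i.castSucc, z, ?_, rfl⟩, rfl⟩
      rw [Fin.val_castSucc, List.getElem?_append_left (by omega)]
      simpa using hz
  · rintro ⟨_, ⟨i, z, hz, rfl⟩, rfl⟩
    induction i using Fin.lastCases with
    | last =>
      obtain rfl : y = z := by simpa [← hT] using hz
      exact ⟨_, ⟨0, x, rfl, rfl⟩, hx⟩
    | cast i =>
      refine ⟨_, ⟨i.succ, z, ?_, rfl⟩, turn_square_succ p i z⟩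
      rw [Fin.val_castSucc, List.getElem?_append_left (by omega)] at hz
      simpa using hz

theorem image_turn_configuration {c c' : Bool} {x y : Symbol b} {T : List (Symbol b)}
    (hT : T.length = ℓ + 1) (h : Rule p c x c' y) :
    turn '' configuration (ℓ := ℓ) (k := k) c p (x :: T) =
      some '' configuration c' skip (T ++ [y]) := by
  simp only [configuration, Set.image_insert_eq, image_turn_onTape hT h.turn_head, h.turn_ctl]

theorem image_turn_onTape_subset {x : Symbol b} {T : List (Symbol b)}
    (hx : turn (head x p : State b ℓ k) = some (sink 0)) :
    turn '' onTape (ℓ := ℓ) (k := k) p (x :: T) ⊆ some '' insert (sink 0) (onTape skip T) := by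
  rintro _ ⟨_, ⟨i, z, hz, rfl⟩, rfl⟩
  induction i using Fin.cases with
  | zero =>
    obtain rfl : x = z := by simpa using hz
    exact ⟨_, .inl rfl, hx.symm⟩
  | succ i => exact ⟨_, .inr ⟨i.castSucc, z, by simpa using hz, rfl⟩, rfl⟩

end Tape

/-- A configuration of the counter. From the head on, the tape holds the digits `high`, the end
marker, and the digits `low`, each list with the least significant digit first. The carry belongs
to the first digit of `high`. -/
structure Config (b ℓ : ℕ) where
  carry : Bool
  phase : Phase
  high : List (Fin b)
  low : List (Fin b)
  length_add_length : high.length + low.length = ℓ + 1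

theorem ofDigits_val_lt (L : List (Fin b)) : Nat.ofDigits b (L.map Fin.val) < b ^ L.length := by
  induction L with
  | nil => simp
  | cons d L ih =>
    calc Nat.ofDigits b ((d :: L).map Fin.val)
        = d + b * Nat.ofDigits b (L.map Fin.val) := by
          rw [List.map_cons, Nat.ofDigits_cons]
      _ < b * (Nat.ofDigits b (L.map Fin.val) + 1) := by linarith [d.isLt]
      _ ≤ b * b ^ L.length := Nat.mul_le_mul_left b ih
      _ = b ^ (d :: L).length := (pow_succ' b L.length).symm

namespace Config

/-- The number that the counter shows, where a carry not yet added is taken into account. -/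
def value (C : Config b ℓ) : ℕ :=
  Nat.ofDigits b (C.low.map Fin.val) +
    b ^ C.low.length * (Nat.ofDigits b (C.high.map Fin.val) + C.carry.toNat)

/-- The content of the squares, from the head on. -/
def tape (C : Config b ℓ) : List (Symbol b) :=
  C.high.map some ++ none :: C.low.map some

/-- The set of states that represents a configuration. -/
def states (k : ℕ) (C : Config b ℓ) : Set (State b ℓ k) :=
  configuration C.carry C.phase C.tape

theorem length_tape (C : Config b ℓ) : C.tape.length = ℓ + 2 := by
  have := C.length_add_length
  simp only [tape, List.length_append, List.length_cons, List.length_map]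
  omega

theorem nontrivial_states (C : Config b ℓ) : (C.states k).Nontrivial :=
  nontrivial_configuration _ _ (List.ne_nil_of_length_eq_add_one C.length_tape)

theorem ctl_mem_states (C : Config b ℓ) : ctl C.carry C.phase ∈ C.states k := .inl rfl

theorem head_mem_states {C : Config b ℓ} {x : Symbol b} {T : List (Symbol b)}
    (hT : C.tape = x :: T) : head x C.phase ∈ C.states k :=
  .inr ⟨0, x, by simp [hT], rfl⟩

theorem tape_of_high_nil {C : Config b ℓ} (h : C.high = []) : C.tape = none :: C.low.map some := by
  simp [tape, h]

theorem tape_of_high_cons {C : Config b ℓ} {d : Fin b} {A : List (Fin b)} (h : C.high = d :: A) :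
    C.tape = some d :: (A.map some ++ none :: C.low.map some) := by
  simp [tape, h]

theorem length_low_of_high_nil {C : Config b ℓ} (h : C.high = []) : C.low.length = ℓ + 1 := by
  simpa [h] using C.length_add_length

theorem value_lt_of_carry_eq_false {C : Config b ℓ} (h : C.high = []) (hc : C.carry = false) :
    C.value < b ^ (ℓ + 1) := by
  simpa [value, h, hc, length_low_of_high_nil h] using ofDigits_val_lt C.low

theorem le_value_of_carry_eq_true {C : Config b ℓ} (h : C.high = []) (hc : C.carry = true) :
    b ^ (ℓ + 1) ≤ C.value := by
  simp [value, h, hc, length_low_of_high_nil h]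

variable [NeZero b]

theorem exists_turn_marker {C : Config b ℓ} (hC : C.high = []) {c' : Bool} {y : Symbol b}
    (h : Rule C.phase C.carry none c' y) :
    ∃ D : Config b ℓ, D.phase = skip ∧ D.value = C.value + c'.toNat ∧
      ∀ k, turn '' C.states k = some '' D.states k := by
  obtain rfl := h.eq_none
  have hlen := length_low_of_high_nil hC
  refine ⟨⟨c', skip, C.low, [], hlen⟩, rfl, by simp [value, hC, h.carry_eq_false], fun k => ?_⟩
  rw [states, tape_of_high_nil hC, image_turn_configuration (by simpa using hlen) h]
  rfl

theorem exists_turn_digit {C : Config b ℓ} {d : Fin b} {A : List (Fin b)} (hC : C.high = d :: A)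
    {c' : Bool} {y : Symbol b} (h : Rule C.phase C.carry (some d) c' y) :
    ∃ D : Config b ℓ, D.phase = skip ∧ D.high = A ∧ D.value = C.value ∧
      ∀ k, turn '' C.states k = some '' D.states k := by
  obtain ⟨d', rfl, hd⟩ := h.exists_digit
  have hlen : A.length + C.low.length = ℓ := by
    have := C.length_add_length
    rw [hC, List.length_cons] at this
    omega
  refine ⟨⟨c', skip, A, C.low ++ [d'], by simp; omega⟩, rfl, rfl, ?_, fun k => ?_⟩
  · simp only [value, hC, List.map_append, List.map_cons, List.map_nil, Nat.ofDigits_append,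
      Nat.ofDigits_cons, Nat.ofDigits_nil, List.length_map, List.length_append,
      List.length_singleton, pow_succ]
    linear_combination b ^ C.low.length * hd
  · rw [states, tape_of_high_cons hC, image_turn_configuration (by simp; omega) h]
    simp [states, tape]

/-- The configuration after a reset. -/
def initial (b ℓ : ℕ) [NeZero b] : Config b ℓ :=
  ⟨false, skip, [], List.replicate (ℓ + 1) 0, by simp⟩

theorem value_initial : (initial b ℓ).value = 0 := by
  simp [initial, value]

theorem states_initial : (initial b ℓ).states k = Set.range reset := by
  have htape : (initial b ℓ).tape = none :: List.replicate (ℓ + 1) (some 0) := by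
    simp [initial, tape]
  rw [states, htape]
  ext r
  constructor
  · rintro (rfl | ⟨i, x, hx, rfl⟩)
    · exact ⟨ctl false skip, rfl⟩
    · induction i using Fin.cases with
      | zero =>
        obtain rfl : none = x := by simpa using hx
        exact ⟨head none skip, rfl⟩
      | succ i =>
        obtain rfl : some 0 = x := (by simpa [List.getElem?_replicate] using hx : _ ∧ _).2
        exact ⟨cell i none, rfl⟩
  · rintro ⟨_ | _ | i | _, rfl⟩
    · exact .inl rfl
    · exact .inr ⟨0, none, rfl, rfl⟩
    · exact .inr ⟨i.succ, some 0, by simp [Fin.is_le], rfl⟩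
    · exact .inl rfl

theorem image_reset_states (C : Config b ℓ) : reset '' C.states k = Set.range reset := by
  refine (Set.image_subset_range _ _).antisymm ?_
  have hsquare (i : Fin (ℓ + 2)) : ∃ x, square C.phase i x ∈ C.states k :=
    ⟨C.tape[i]'(by simp [length_tape]), .inr ⟨i, _, by simp, rfl⟩⟩
  rintro _ ⟨_ | _ | i | _, rfl⟩
  · exact ⟨_, C.ctl_mem_states, rfl⟩
  · obtain ⟨x, hx⟩ := hsquare 0
    exact ⟨_, hx, rfl⟩
  · obtain ⟨x, hx⟩ := hsquare i.succ
    exact ⟨_, hx, rfl⟩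
  · exact ⟨_, C.ctl_mem_states, rfl⟩

theorem exists_next (C : Config b ℓ) (a : Fin 3) (hC : C.value < b ^ (ℓ + 1))
    (hdef : ∀ q ∈ C.states k, (next q a).isSome) :
    ∃ D : Config b ℓ, D.value ≤ C.value + 1 ∧ some '' D.states k ⊆ (next · a) '' C.states k := by
  have hctl := hdef _ C.ctl_mem_states
  match a with
  | 0 =>
    refine ⟨initial b ℓ, by simp [value_initial], ?_⟩
    rw [states_initial, ← C.image_reset_states, Set.image_image]
    rfl
  | 1 =>
    obtain ⟨p', hp'⟩ : ∃ p', C.phase.succ = some p' := by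
      simpa [next, tick, Option.isSome_iff_exists] using hctl
    exact ⟨{ C with phase := p' }, Nat.le_succ _, (image_tick_configuration hp' _ _).ge⟩
  | 2 =>
    match hhigh : C.high with
    | [] =>
      have hhead := hdef _ (head_mem_states (tape_of_high_nil hhigh))
      obtain ⟨c', y, h⟩ | ⟨hc, -⟩ := Rule.exists_or_overflow hctl hhead
      · obtain ⟨D, -, hv, hD⟩ := exists_turn_marker hhigh h
        exact ⟨D, by grind [Bool.toNat_le], (hD k).ge⟩
      · exact absurd hC (le_value_of_carry_eq_true hhigh hc).not_gt
    | d :: A =>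
      have hhead := hdef _ (head_mem_states (tape_of_high_cons hhigh))
      obtain ⟨c', y, h⟩ | ⟨-, hd⟩ := Rule.exists_or_overflow hctl hhead
      · obtain ⟨D, -, -, hv, hD⟩ := exists_turn_digit hhigh h
        exact ⟨D, by omega, (hD k).ge⟩
      · cases hd

end Config

section Synchronization

variable [NeZero b]

theorem pow_le_length_of_isCareSyncWord {w : List (Fin 3)}
    (hw : IsCareSyncWord (next (b := b) (ℓ := ℓ) (k := k)) w) : b ^ (ℓ + 1) ≤ w.length := by
  obtain ⟨s, hs⟩ := hw
  have hinit : PFASyncsOn next ((Config.initial b ℓ).states k) w := ⟨s, fun q _ => hs q⟩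
  simpa [Config.value_initial] using PFASyncsOn.le_add_length (fun C => C.nontrivial_states)
    (fun C a => C.exists_next a) hinit

theorem exists_syncsOn_onTape (L : List (Fin b)) :
    ∃ w, PFASyncsOn next (insert (sink 0) (onTape (ℓ := ℓ) (k := k) skip (L.map some))) w := by
  induction L with
  | nil => exact ⟨[], sink 0, by rintro _ (rfl | ⟨_, _, h, -⟩) <;> [rfl; cases h]⟩
  | cons d L ih =>
    obtain ⟨w, hw⟩ := ih
    refine ⟨1 :: 2 :: w, .cons (S' := insert (sink 1) (onTape erase ((d :: L).map some))) ?_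
      (hw.cons ?_)⟩
    · refine (Set.image_insert_eq.trans ?_).le
      rw [Set.image_insert_eq, ← image_tick_onTape (p := skip) rfl]
      congr 1
    · refine Set.image_insert_eq.trans_le (Set.insert_subset ⟨_, .inl rfl, rfl⟩ ?_)
      exact image_turn_onTape_subset rfl

theorem exists_syncsOn_skip_of_phase {c : Bool} {T : List (Symbol b)} (p : Phase)
    (h : ∃ w, PFASyncsOn next (configuration (ℓ := ℓ) (k := k) c p T) w) :
    ∃ w, PFASyncsOn next (configuration (ℓ := ℓ) (k := k) c skip T) w := by
  induction p using Phase.succ_induction with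
  | skip => exact h
  | succ p p' hp ih =>
    obtain ⟨w, hw⟩ := h
    exact ih ⟨1 :: w, hw.cons (image_tick_configuration hp c T).le⟩

theorem exists_syncsOn_overflow (L : List (Fin b)) :
    ∃ w, PFASyncsOn next
      (configuration (ℓ := ℓ) (k := k) true skip (none :: L.map some)) w := by
  obtain ⟨w, hw⟩ := exists_syncsOn_onTape (ℓ := ℓ) (k := k) L
  refine exists_syncsOn_skip_of_phase finish ⟨2 :: w, hw.cons ?_⟩
  refine Set.image_insert_eq.trans_le (Set.insert_subset ⟨_, .inl rfl, rfl⟩ ?_)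
  exact image_turn_onTape_subset rfl

theorem exists_syncsOn_states (C : Config b ℓ) (hC : C.phase = skip) :
    ∃ w, PFASyncsOn next (C.states k) w := by
  -- A turn uses up a digit of `high` or, when there is none left, raises the value.
  induction hm : toLex (b ^ (ℓ + 1) - C.value, C.high.length)
    using WellFoundedLT.induction generalizing C with | ind m ih
  subst hm
  have of_phase (p : Phase) (h : ∃ w, PFASyncsOn next ({ C with phase := p }.states k) w) :
      ∃ w, PFASyncsOn next (C.states k) w := by
    rw [Config.states, hC]
    exact exists_syncsOn_skip_of_phase p h
  by_cases hhigh : C.high = []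
  · obtain hc | hc := C.carry.eq_false_or_eq_true
    · rw [Config.states, hC, Config.tape_of_high_nil hhigh, hc]
      exact exists_syncsOn_overflow C.low
    · have hlt := Config.value_lt_of_carry_eq_false hhigh hc
      have hrule : Rule start C.carry (none : Symbol b) true none := hc ▸ .start
      obtain ⟨D, hD, hv, himage⟩ :=
        Config.exists_turn_marker (C := { C with phase := start }) hhigh hrule
      change D.value = C.value + 1 at hv
      obtain ⟨w, hw⟩ := ih _ (Prod.Lex.toLex_lt_toLex.2 (.inl (by dsimp only; omega))) D hD rfl
      exact of_phase start ⟨2 :: w, hw.cons (himage k).le⟩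
  · obtain ⟨d, A, hhigh⟩ := List.exists_cons_of_ne_nil hhigh
    obtain ⟨p, c', y, hrule⟩ := Rule.exists_of_digit C.carry d
    obtain ⟨D, hD, hA, hv, himage⟩ :=
      Config.exists_turn_digit (C := { C with phase := p }) hhigh hrule
    change D.value = C.value at hv
    obtain ⟨w, hw⟩ := ih _ (Prod.Lex.toLex_lt_toLex.2 (.inr (by simp [hv, hA, hhigh]))) D hD rfl
    exact of_phase p ⟨2 :: w, hw.cons (himage k).le⟩

theorem exists_isCareSyncWord :
    ∃ w, IsCareSyncWord (next (b := b) (ℓ := ℓ) (k := k)) w := by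
  obtain ⟨w, hw⟩ := exists_syncsOn_states (k := k) (Config.initial b ℓ) rfl
  have hreset : (fun q : State b ℓ k => next q 0) '' Set.univ ⊆
      some '' (Config.initial b ℓ).states k := by
    rintro _ ⟨q, -, rfl⟩
    exact ⟨reset q, Config.states_initial.ge ⟨q, rfl⟩, rfl⟩
  obtain ⟨s, hs⟩ := hw.cons hreset
  exact ⟨0 :: w, s, fun q => hs q trivial⟩

end Synchronization

section Transitivity

variable [NeZero b]

theorem reach_of_succ {P : Phase → State b ℓ k}
    (hP : ∀ p p', p.succ = some p' → tick (P p) = some (P p')) (p : Phase) :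
    PFAReach next (P skip) (P p) := by
  induction p using Phase.succ_induction with
  | skip => rfl
  | succ p p' hp ih => exact ih.tail ⟨1, hP p p' hp⟩

theorem reach_ctl (c : Bool) (p : Phase) :
    PFAReach next (ctl c skip : State b ℓ k) (ctl c p) :=
  reach_of_succ (fun _ _ h => by simp [tick, h]) p

theorem reach_square (i : Fin (ℓ + 2)) (x : Symbol b) (p : Phase) :
    PFAReach next (square skip i x : State b ℓ k) (square p i x) :=
  reach_of_succ (fun _ _ h => tick_square h i x) p

theorem reach_square_of_le {i j : Fin (ℓ + 2)} (h : i ≤ j) (x : Symbol b) :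
    PFAReach next (square skip j x : State b ℓ k) (square skip i x) := by
  induction j using Fin.induction with
  | zero => rw [Fin.le_zero_iff.1 h]
  | succ j ih =>
    obtain rfl | h := h.eq_or_lt
    · rfl
    · exact (ih (Fin.le_castSucc_iff.2 h)).head ⟨2, rfl⟩

theorem reach_of_turn_ctl {c : Bool} {p : Phase} {q : State b ℓ k} (h : turn (ctl c p) = some q) :
    PFAReach next (ctl c skip) q :=
  (reach_ctl c p).tail ⟨2, h⟩

theorem reach_of_turn_head {x : Symbol b} {p : Phase} {q : State b ℓ k}
    (h : turn (head x p) = some q) : PFAReach next (head x skip) q :=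
  (reach_square 0 x p).tail ⟨2, h⟩

theorem reach_sink (q : State b ℓ k) : PFAReach next q (sink 0) := by
  have hstart : PFAReach next (ctl false skip : State b ℓ k) (ctl true skip) :=
    reach_of_turn_ctl (p := start) rfl
  have hctl : PFAReach next (ctl false skip : State b ℓ k) (sink 0) :=
    hstart.trans (reach_of_turn_ctl (p := finish) rfl)
  cases q with
  | ctl c p => exact hctl.head ⟨0, rfl⟩
  | head x p => exact (reach_of_turn_head (p := finish) rfl).head ⟨0, rfl⟩
  | cell i x =>
    have hzero : PFAReach next (cell i (some 0) : State b ℓ k) (head (some 0) skip) :=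
      reach_square_of_le (Fin.zero_le i.succ) (some 0)
    exact (hzero.trans (reach_of_turn_head (p := erase) rfl)).head ⟨0, rfl⟩
  | sink i => exact hctl.head ⟨0, rfl⟩

theorem sink_reach_digit (d : ℕ) (hd : d < b) :
    PFAReach next (sink 0 : State b ℓ k) (head (some ⟨d, hd⟩) skip) := by
  induction d with
  | zero =>
    exact (reach_square_of_le (Fin.zero_le (Fin.last (ℓ + 1))) (some 0)).head ⟨2, rfl⟩
  | succ d ih =>
    have hwrite : PFAReach next (head (some ⟨d, by omega⟩) skip : State b ℓ k)
        (square skip (Fin.last (ℓ + 1)) (some ⟨d + 1, hd⟩)) :=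
      reach_of_turn_head (Rule.absorb _ hd).turn_head
    exact ((ih _).trans hwrite).trans (reach_square_of_le (Fin.zero_le _) _)

theorem sink_reach (q : State b ℓ k) : PFAReach next (sink 0) q := by
  have hctl : PFAReach next (sink 0 : State b ℓ k) (ctl false skip) := .single ⟨0, rfl⟩
  have hhead (x : Symbol b) : PFAReach next (sink 0 : State b ℓ k) (head x skip) := by
    cases x with
    | none => exact (sink_reach_digit 0 (NeZero.pos b)).tail ⟨0, rfl⟩
    | some d => exact sink_reach_digit d d.isLt
  cases q with
  | ctl c p =>
    cases c with
    | false => exact hctl.trans (reach_ctl false p)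
    | true => exact (hctl.trans (reach_of_turn_ctl (p := start) rfl)).trans (reach_ctl true p)
  | head x p => exact (hhead x).trans (reach_square 0 x p)
  | cell i x =>
    have hlast : PFAReach next (head x skip : State b ℓ k) (square skip (Fin.last (ℓ + 1)) x) :=
      reach_of_turn_head (p := skip) rfl
    exact ((hhead x).trans hlast).trans (reach_square_of_le (Fin.le_last i.succ) x)
  | sink i =>
    induction i using Fin.induction with
    | zero => rfl
    | succ i ih => exact ih.tail ⟨1, by simp [next, tick, Fin.ext_iff]; omega⟩

theorem pfaTransitive_next : PFATransitive (next (b := b) (ℓ := ℓ) (k := k)) :=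
  fun q q' => exists_pfaRun_eq_some_of_pfaReach ((reach_sink q).trans (sink_reach q'))

end Transitivity

end PFACounter

theorem exists_transitive_pfa_pow_le (b ℓ k : ℕ) [NeZero b] :
    ∃ δ : Fin ((b + 1) * (ℓ + 7) + k + 14) → Fin 3 → Option (Fin ((b + 1) * (ℓ + 7) + k + 14)),
      PFATransitive δ ∧ (∃ w, IsCareSyncWord δ w) ∧
        ∀ w, IsCareSyncWord δ w → b ^ (ℓ + 1) ≤ w.length := by
  obtain ⟨e⟩ := PFACounter.State.nonempty_equiv_fin b ℓ k
  obtain ⟨w, hw⟩ := PFACounter.exists_isCareSyncWord (b := b) (ℓ := ℓ) (k := k)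
  exact ⟨pfaMap e PFACounter.next, PFACounter.pfaTransitive_next.pfaMap e,
    ⟨w, (isCareSyncWord_pfaMap e).2 hw⟩, fun w hw =>
      PFACounter.pow_le_length_of_isCareSyncWord ((isCareSyncWord_pfaMap e).1 hw)⟩

theorem exists_ternary_transitive_pfa_exp_general (n : ℕ) (hn : 49 ≤ n) :
    ∃ δ : Fin n → Fin 3 → Option (Fin n),
      PFATransitive δ ∧ (∃ w : List (Fin 3), IsCareSyncWord δ w) ∧
      ∀ w : List (Fin 3), IsCareSyncWord δ w →
        (2 : ℝ) ^ (-20 : ℝ) * 2 ^ (2 * (n : ℝ) / 5) ≤ w.length := by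
  obtain ⟨ℓ, k, hk, rfl⟩ : ∃ ℓ k, k < 5 ∧ n = (4 + 1) * (ℓ + 7) + k + 14 :=
    ⟨(n - 49) / 5, (n - 49) % 5, by omega, by omega⟩
  obtain ⟨δ, htrans, hsync, hlen⟩ := exists_transitive_pfa_pow_le 4 ℓ k
  refine ⟨δ, htrans, hsync, fun w hw => ?_⟩
  have hk' : (k : ℝ) ≤ 4 := by exact_mod_cast Nat.le_of_lt_succ hk
  calc (2 : ℝ) ^ (-20 : ℝ) * 2 ^ (2 * (((4 + 1) * (ℓ + 7) + k + 14 : ℕ) : ℝ) / 5)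
      = 2 ^ (-20 + 2 * (((4 + 1) * (ℓ + 7) + k + 14 : ℕ) : ℝ) / 5) :=
        (Real.rpow_add two_pos _ _).symm
    _ ≤ 2 ^ ((2 * (ℓ + 1) : ℕ) : ℝ) := by
        refine Real.rpow_le_rpow_of_exponent_le one_le_two ?_
        push_cast
        linarith
    _ = ((4 ^ (ℓ + 1) : ℕ) : ℝ) := by
        rw [Real.rpow_natCast, pow_mul]
        norm_num
    _ ≤ w.length := by exact_mod_cast hlen w hw

/-- There is a sequence of transitive carefully synchronizing PFAs with three symbols,
`n` states and shortest carefully synchronizing word length `Ω(2^{2n/5}/n)`. -/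
theorem exists_ternary_transitive_pfa_exp : ∃ c : ℝ, 0 < c ∧ ∃ N : ℕ, ∀ n : ℕ, N ≤ n →
    ∃ δ : Fin n → Fin 3 → Option (Fin n),
      PFATransitive δ ∧ (∃ w : List (Fin 3), IsCareSyncWord δ w) ∧
      ∀ w : List (Fin 3), IsCareSyncWord δ w →
        c * (2 : ℝ) ^ (2 * (n : ℝ) / 5) / (n : ℝ) ≤ (w.length : ℝ) := by
  refine ⟨2 ^ (-20 : ℝ), by positivity, 49, fun n hn => ?_⟩
  obtain ⟨δ, htrans, hsync, hlen⟩ := exists_ternary_transitive_pfa_exp_general n hn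
  have hn' : (1 : ℝ) ≤ n := by exact_mod_cast (by omega : 1 ≤ n)
  exact ⟨δ, htrans, hsync, fun w hw => (div_le_self (by positivity) hn').trans (hlen w hw)⟩
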